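/- arXiv:1410.6222 — 2 statements merged into one kernel-verified Lean document; each statement's English description precedes it below -/
import Mathlib

section
/- Let X be a finite-dimensional real normed space, Y a real normed space, D ⊆ X nonempty, closed and convex, F : X → Y continuous, y^δ ∈ Y, and p ∈ [1, ∞). Let f : X → ℝ be nonnegative, convex, lower semicontinuous and coercive, and let x₀ ∈ D be such that f(x) = 0 if and only if x = x₀. Assume that for every α > 0 the Tikhonov functional T_α(x) = ‖F(x) − y^δ‖^p + α f(x) has at least one minimizer over D. Let 1 < τ₁ ≤ τ₂ and c > 0, suppose there exists z ∈ D with ‖F(z) − y^δ‖ ≤ c, and suppose ‖F(x₀) − y^δ‖ > τ₂ c. Then there exist α₁ > 0 and a minimizer x₁ of T_{α₁} over D with ‖F(x₁) − y^δ‖ < τ₁ c, and there exist α₂ > 0 and a minimizer x₂ of T_{α₂} over D with ‖F(x₂) − y^δ‖ > τ₂ c. -/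
/-!
A minimizer `x` of `T_α` satisfies `T_α x ≤ T_α v` for every competitor `v ∈ D`. Comparing with `z`
and letting `α → 0` forces the fidelity of `x` below any number larger than the fidelity of `z`.
Comparing with `x₀` and letting `α → ∞` forces `f x` down to the minimum `f x₀`; as `x₀` is the only
minimum point of `f`, compactness of a sublevel set makes `x` converge to `x₀`, and hence the
residual of `x` to that of `x₀`.
-/

open Filter Set Topology

/-- The Tikhonov functional `T_α = φ + α f` with fidelity term `φ`, penalty `f` and regularization
parameter `α`. The fidelity is an arbitrary function; the classical choice is
`φ x = ‖F x - y‖ ^ p`. -/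
def tikhonov {X : Type*} (φ f : X → ℝ) (α : ℝ) (x : X) : ℝ :=
  φ x + α * f x

section

variable {X : Type*} {φ f : X → ℝ} {D : Set X}

theorem eventually_fidelity_lt_of_isMinOn_tikhonov {z : X} {b : ℝ} (hf : BddBelow (f '' D))
    (hzD : z ∈ D) (hzb : φ z < b) :
    ∀ᶠ α in 𝓝[>] 0, ∀ x ∈ D, IsMinOn (tikhonov φ f α) D x → φ x < b := by
  obtain ⟨m, hm⟩ := hf
  have hlim : Tendsto (fun α : ℝ ↦ φ z + α * (f z - m)) (𝓝[>] 0) (𝓝 (φ z)) := by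
    refine tendsto_nhdsWithin_of_tendsto_nhds ?_
    simpa using (by fun_prop : Continuous fun α : ℝ ↦ φ z + α * (f z - m)).tendsto 0
  filter_upwards [hlim.eventually_lt_const hzb, self_mem_nhdsWithin] with α hαb hα x hxD hx
  have hmin : φ x + α * f x ≤ φ z + α * f z := hx hzD
  have hmx : α * m ≤ α * f x :=
    mul_le_mul_of_nonneg_left (hm (mem_image_of_mem f hxD)) (le_of_lt hα)
  linarith

theorem eventually_penalty_lt_of_isMinOn_tikhonov {v : X} {b : ℝ} (hφ : BddBelow (φ '' D))
    (hvD : v ∈ D) (hvb : f v < b) :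
    ∀ᶠ α in atTop, ∀ x ∈ D, IsMinOn (tikhonov φ f α) D x → f x < b := by
  obtain ⟨m, hm⟩ := hφ
  have hlim : Tendsto (fun α : ℝ ↦ α * (b - f v)) atTop atTop :=
    tendsto_id.atTop_mul_const (sub_pos.2 hvb)
  filter_upwards [hlim.eventually_gt_atTop (φ v - m), eventually_gt_atTop 0] with α hαb hα x hxD hx
  have hmin : φ x + α * f x ≤ φ v + α * f v := hx hvD
  have hmx : m ≤ φ x := hm (mem_image_of_mem φ hxD)
  refine lt_of_mul_lt_mul_left ?_ hα.le
  linarith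

end

theorem exists_sublevel_subset_of_mem_nhds {X β : Type*} [TopologicalSpace X] [LinearOrder β]
    {f : X → β} {x₀ : X} {C : β} {U : Set X} (hf : LowerSemicontinuous f)
    (hx₀ : ∀ x, x ≠ x₀ → f x₀ < f x) (hC : f x₀ < C) (hcompact : IsCompact {x | f x ≤ C})
    (hU : U ∈ 𝓝 x₀) : ∃ b, f x₀ < b ∧ {x | f x < b} ⊆ U := by
  have hK : IsCompact ({x | f x ≤ C} \ interior U) := hcompact.diff isOpen_interior
  rcases eq_empty_or_nonempty ({x | f x ≤ C} \ interior U) with hempty | hne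
  · exact ⟨C, hC, fun x hx ↦ interior_subset (sdiff_eq_empty.1 hempty (le_of_lt hx))⟩
  · obtain ⟨m, ⟨hmC, hmU⟩, hm⟩ := (hf.lowerSemicontinuousOn _).exists_isMinOn hne hK
    have hmx₀ : m ≠ x₀ := fun h ↦ hmU (h ▸ mem_interior_iff_mem_nhds.2 hU)
    refine ⟨f m, hx₀ m hmx₀, fun x hx ↦ ?_⟩
    by_contra hxU
    exact (hm ⟨(le_of_lt hx).trans hmC, fun h ↦ hxU (interior_subset h)⟩).not_gt hx

theorem eventually_mem_of_isMinOn_tikhonov {X : Type*} [TopologicalSpace X] {φ f : X → ℝ}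
    {D U : Set X} {x₀ : X} {C : ℝ} (hφ : BddBelow (φ '' D)) (hf : LowerSemicontinuous f)
    (hx₀D : x₀ ∈ D) (hx₀ : ∀ x, x ≠ x₀ → f x₀ < f x) (hC : f x₀ < C)
    (hcompact : IsCompact {x | f x ≤ C}) (hU : U ∈ 𝓝 x₀) :
    ∀ᶠ α in atTop, ∀ x ∈ D, IsMinOn (tikhonov φ f α) D x → x ∈ U := by
  obtain ⟨b, hb, hbU⟩ := exists_sublevel_subset_of_mem_nhds hf hx₀ hC hcompact hU
  filter_upwards [eventually_penalty_lt_of_isMinOn_tikhonov hφ hx₀D hb] with α hα x hxD hx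
  exact hbU (hα x hxD hx)

theorem stmt_7_general {X Y : Type*} [TopologicalSpace X] [SeminormedAddCommGroup Y] {D : Set X}
    {F : X → Y} {yδ : Y} {p : ℝ} (hp : 0 < p) {f : X → ℝ} (hf : LowerSemicontinuous f)
    {x₀ : X} (hx₀D : x₀ ∈ D) (hx₀ : ∀ x, x ≠ x₀ → f x₀ < f x) (hF : ContinuousAt F x₀)
    {C : ℝ} (hC : f x₀ < C) (hcompact : IsCompact {x | f x ≤ C})
    (hmin : ∀ α : ℝ, 0 < α → ∃ x ∈ D, IsMinOn (tikhonov (‖F · - yδ‖ ^ p) f α) D x)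
    {ρ₁ ρ₂ : ℝ} {z : X} (hzD : z ∈ D) (hz : ‖F z - yδ‖ < ρ₁) (hx₀res : ρ₂ < ‖F x₀ - yδ‖) :
    (∃ α₁ : ℝ, 0 < α₁ ∧ ∃ x₁ ∈ D,
      IsMinOn (tikhonov (‖F · - yδ‖ ^ p) f α₁) D x₁ ∧ ‖F x₁ - yδ‖ < ρ₁) ∧
    (∃ α₂ : ℝ, 0 < α₂ ∧ ∃ x₂ ∈ D,
      IsMinOn (tikhonov (‖F · - yδ‖ ^ p) f α₂) D x₂ ∧ ρ₂ < ‖F x₂ - yδ‖) := by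
  constructor
  · have hf_bdd : BddBelow (f '' D) :=
      ⟨f x₀, forall_mem_image.2 fun x _ ↦
        (eq_or_ne x x₀).elim (fun h ↦ h ▸ le_rfl) fun h ↦ (hx₀ x h).le⟩
    have hzp : ‖F z - yδ‖ ^ p < ρ₁ ^ p := Real.rpow_lt_rpow (norm_nonneg _) hz hp
    obtain ⟨α, hsmall, hα⟩ := ((eventually_fidelity_lt_of_isMinOn_tikhonov (φ := (‖F · - yδ‖ ^ p))
      hf_bdd hzD hzp).and self_mem_nhdsWithin).exists
    obtain ⟨x, hxD, hx⟩ := hmin α hα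
    exact ⟨α, hα, x, hxD, hx,
      (Real.rpow_lt_rpow_iff (norm_nonneg _) ((norm_nonneg _).trans hz.le) hp).1 (hsmall x hxD hx)⟩
  · have hφ_bdd : BddBelow ((‖F · - yδ‖ ^ p) '' D) :=
      ⟨0, forall_mem_image.2 fun _ _ ↦ by positivity⟩
    have hnhds : {x | ρ₂ < ‖F x - yδ‖} ∈ 𝓝 x₀ :=
      (hF.sub continuousAt_const).norm.eventually_const_lt hx₀res
    obtain ⟨α, hlarge, hα⟩ := ((eventually_mem_of_isMinOn_tikhonov hφ_bdd hf hx₀D hx₀ hC hcompact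
      hnhds).and (eventually_gt_atTop 0)).exists
    obtain ⟨x, hxD, hx⟩ := hmin α hα
    exact ⟨α, hα, x, hxD, hx, hlarge x hxD hx⟩

/-- For small `α` the residual of Tikhonov minimizers drops below `τ₁ c`, while for
large `α` it exceeds `τ₂ c`. -/
theorem stmt_7 {X Y : Type*} [NormedAddCommGroup X] [NormedSpace ℝ X]
    [FiniteDimensional ℝ X]
    [NormedAddCommGroup Y] [NormedSpace ℝ Y]
    (D : Set X) (hDne : D.Nonempty) (hDclosed : IsClosed D) (hDconv : Convex ℝ D)
    (F : X → Y) (hF : Continuous F) (yδ : Y)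
    (p : ℝ) (hp : 1 ≤ p)
    (f : X → ℝ) (hf0 : ∀ x, 0 ≤ f x) (hfconv : ConvexOn ℝ Set.univ f)
    (hflsc : LowerSemicontinuous f)
    (hfcoer : ∀ C : ℝ, Bornology.IsBounded {x : X | f x ≤ C})
    (x₀ : X) (hx₀D : x₀ ∈ D) (hx₀ : ∀ x, f x = 0 ↔ x = x₀)
    (hmin : ∀ α : ℝ, 0 < α → ∃ x ∈ D, ∀ v ∈ D,
      ‖F x - yδ‖ ^ p + α * f x ≤ ‖F v - yδ‖ ^ p + α * f v)
    (τ₁ τ₂ : ℝ) (hτ₁ : 1 < τ₁) (hτ₁₂ : τ₁ ≤ τ₂)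
    (c : ℝ) (hc : 0 < c)
    (z : X) (hzD : z ∈ D) (hz : ‖F z - yδ‖ ≤ c)
    (hx₀res : τ₂ * c < ‖F x₀ - yδ‖) :
    (∃ α₁ : ℝ, 0 < α₁ ∧ ∃ x₁ ∈ D,
      (∀ v ∈ D, ‖F x₁ - yδ‖ ^ p + α₁ * f x₁ ≤ ‖F v - yδ‖ ^ p + α₁ * f v) ∧
      ‖F x₁ - yδ‖ < τ₁ * c) ∧
    (∃ α₂ : ℝ, 0 < α₂ ∧ ∃ x₂ ∈ D,
      (∀ v ∈ D, ‖F x₂ - yδ‖ ^ p + α₂ * f x₂ ≤ ‖F v - yδ‖ ^ p + α₂ * f v) ∧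
      τ₂ * c < ‖F x₂ - yδ‖) := by
  have hfx₀ : f x₀ = 0 := (hx₀ x₀).2 rfl
  have hpos : ∀ x, x ≠ x₀ → f x₀ < f x := fun x hx ↦
    hfx₀ ▸ (hf0 x).lt_of_ne' (mt (hx₀ x).1 hx)
  have hcompact : IsCompact {x | f x ≤ f x₀ + 1} :=
    Metric.isCompact_of_isClosed_isBounded (hflsc.isClosed_preimage _) (hfcoer _)
  exact stmt_7_general (zero_lt_one.trans_le hp) hflsc hx₀D hpos hF.continuousAt
    (lt_add_one _) hcompact hmin hzD (hz.trans_lt (lt_mul_of_one_lt_left hc hτ₁)) hx₀res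
end

section
/- Let X and Y be real normed spaces, D_m ⊆ X, F : X → Y, y ∈ Y, y^δ ∈ Y with ‖y − y^δ‖ ≤ δ for some δ > 0, p ∈ [1, ∞), α > 0, 1 < τ₁ ≤ τ₂, and γ ≥ 0. Let f : X → ℝ be convex, let x† satisfy F(x†) = y, and let ξ be a continuous linear functional on X that is a subgradient of f at x†; write D_ξ(u, x†) := f(u) − f(x†) − ξ(u − x†). Let z ∈ D_m with ‖F(z) − y^δ‖ ≤ δ + γ, and set η := D_ξ(z, x†) and φ := ‖z − x†‖. Let β₁ ∈ [0, 1) and β₂ ≥ 0 and assume ξ(x† − x) ≤ β₁ D_ξ(x, x†) + β₂ ‖F(x) − F(x†)‖, where x ∈ D_m minimizes T_α(v) = ‖F(v) − y^δ‖^p + α f(v) over D_m and satisfies τ₁(δ + γ) ≤ ‖F(x) − y^δ‖ ≤ τ₂(δ + γ). Then ‖F(x) − y^δ‖ ≤ τ₂(δ + γ) and D_ξ(x, x†) ≤ (η + ‖ξ‖ φ + β₂ (τ₂ + 1)(δ + γ)) / (1 − β₁), where ‖ξ‖ is the operator norm of ξ. -/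
/-!
The lower discrepancy bound gives `‖F z - yδ‖ ≤ ‖F x - yδ‖`, so `T_α(x) ≤ T_α(z)` forces
`f x ≤ f z`. Linearizing at `x†`, this reads `D_ξ(x, x†) ≤ D_ξ(z, x†) + ξ (z - x†) + ξ (x† - x)`.
The variational inequality bounds the last term by `β₁ D_ξ(x, x†)`, which is absorbed into the
left-hand side since `β₁ < 1`, plus a residual controlled by the upper discrepancy bound.
-/

/-- The Tikhonov functional `T_α(v) = ‖F v - yδ‖ ^ p + α f(v)`, balancing the data misfit against
the penalty `f`. -/
noncomputable def tikhonovFunctional {X Y : Type*} [SeminormedAddCommGroup Y]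
    (F : X → Y) (yδ : Y) (p α : ℝ) (f : X → ℝ) (v : X) : ℝ :=
  ‖F v - yδ‖ ^ p + α * f v

theorem penalty_le_of_tikhonovFunctional_le {X Y : Type*} [SeminormedAddCommGroup Y]
    {F : X → Y} {yδ : Y} {p α : ℝ} {f : X → ℝ} {x z : X} (hp : 0 ≤ p) (hα : 0 < α)
    (hT : tikhonovFunctional F yδ p α f x ≤ tikhonovFunctional F yδ p α f z)
    (hres : ‖F z - yδ‖ ≤ ‖F x - yδ‖) : f x ≤ f z := by
  have hpow : ‖F z - yδ‖ ^ p ≤ ‖F x - yδ‖ ^ p := Real.rpow_le_rpow (norm_nonneg _) hres hp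
  unfold tikhonovFunctional at hT
  exact le_of_mul_le_mul_left (by linarith) hα

section Bregman

variable {X : Type*} [SeminormedAddCommGroup X] [NormedSpace ℝ X]
  {f : X → ℝ} {ξ : X →L[ℝ] ℝ} {x₀ x z : X} {β c : ℝ}

/-- The Bregman distance `D_ξ(u, x₀)` of `f` at `x₀`, measuring the error at `u`. The functional `ξ`
is arbitrary here, so the value may be negative unless `ξ` is a subgradient of `f` at `x₀`. -/
def bregmanDist (f : X → ℝ) (ξ : X →L[ℝ] ℝ) (x₀ u : X) : ℝ :=
  f u - f x₀ - ξ (u - x₀)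

theorem bregmanDist_nonneg (hξ : ∀ u, f x₀ + ξ (u - x₀) ≤ f u) (u : X) :
    0 ≤ bregmanDist f ξ x₀ u := by
  unfold bregmanDist
  linarith [hξ u]

theorem bregmanDist_sub_bregmanDist (f : X → ℝ) (ξ : X →L[ℝ] ℝ) (x₀ x z : X) :
    bregmanDist f ξ x₀ x - bregmanDist f ξ x₀ z = f x - f z + ξ (z - x₀) + ξ (x₀ - x) := by
  simp only [bregmanDist, map_sub]
  ring

theorem bregmanDist_le_of_le (hf : f x ≤ f z) :
    bregmanDist f ξ x₀ x ≤ bregmanDist f ξ x₀ z + ‖ξ‖ * ‖z - x₀‖ + ξ (x₀ - x) := by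
  have hop : ξ (z - x₀) ≤ ‖ξ‖ * ‖z - x₀‖ := (le_abs_self _).trans (ξ.le_opNorm _)
  linarith [bregmanDist_sub_bregmanDist f ξ x₀ x z]

theorem bregmanDist_le_div_of_variational_ineq (hf : f x ≤ f z) (hβ : β < 1)
    (hVI : ξ (x₀ - x) ≤ β * bregmanDist f ξ x₀ x + c) :
    bregmanDist f ξ x₀ x ≤ (bregmanDist f ξ x₀ z + ‖ξ‖ * ‖z - x₀‖ + c) / (1 - β) := by
  rw [le_div_iff₀ (sub_pos.mpr hβ)]
  linarith [bregmanDist_le_of_le (ξ := ξ) (x₀ := x₀) hf]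

end Bregman

theorem stmt_19_general {X Y : Type*} [SeminormedAddCommGroup X] [NormedSpace ℝ X]
    [SeminormedAddCommGroup Y] {F : X → Y} {yδ : Y} {f : X → ℝ} {ξ : X →L[ℝ] ℝ} {xdag x z : X}
    {p α ε τ β₁ β₂ : ℝ} (hp : 0 ≤ p) (hα : 0 < α) (hβ₁ : β₁ < 1) (hβ₂ : 0 ≤ β₂)
    (hξ : ∀ u, f xdag + ξ (u - xdag) ≤ f u)
    (hxdag : ‖F xdag - yδ‖ ≤ ε) (hz : ‖F z - yδ‖ ≤ ε)
    (hT : tikhonovFunctional F yδ p α f x ≤ tikhonovFunctional F yδ p α f z)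
    (hlower : ε ≤ ‖F x - yδ‖) (hupper : ‖F x - yδ‖ ≤ τ * ε)
    (hVI : ξ (xdag - x) ≤ β₁ * bregmanDist f ξ xdag x + β₂ * ‖F x - F xdag‖) :
    bregmanDist f ξ xdag x ∈ Set.Icc 0
      ((bregmanDist f ξ xdag z + ‖ξ‖ * ‖z - xdag‖ + β₂ * (τ + 1) * ε) / (1 - β₁)) := by
  have hf : f x ≤ f z := penalty_le_of_tikhonovFunctional_le hp hα hT (hz.trans hlower)
  have himage : ‖F x - F xdag‖ ≤ (τ + 1) * ε :=
    calc
      ‖F x - F xdag‖ ≤ ‖F x - yδ‖ + ‖F xdag - yδ‖ := by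
        simpa only [dist_eq_norm] using dist_triangle_right (F x) (F xdag) yδ
      _ ≤ (τ + 1) * ε := by linarith
  have hmisfit : β₂ * ‖F x - F xdag‖ ≤ β₂ * (τ + 1) * ε := by
    rw [mul_assoc]
    exact mul_le_mul_of_nonneg_left himage hβ₂
  exact ⟨bregmanDist_nonneg hξ x,
    bregmanDist_le_div_of_variational_ineq hf hβ₁ (hVI.trans (by gcongr))⟩

/-- Explicit convergence-rate estimate under the discrete Morozov principle:
the Bregman distance of the Tikhonov minimizer is controlled by the discretization
quantities `η = D_ξ(z, x†)`, `φ = ‖z − x†‖` and by the noise/discretization level. -/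
theorem stmt_19 {X Y : Type*} [NormedAddCommGroup X] [NormedSpace ℝ X]
    [NormedAddCommGroup Y] [NormedSpace ℝ Y]
    (Dm : Set X) (F : X → Y) (y yδ : Y) (δ : ℝ) (hδ : 0 < δ)
    (hnoise : ‖y - yδ‖ ≤ δ)
    (p : ℝ) (hp : 1 ≤ p) (α : ℝ) (hα : 0 < α)
    (τ₁ τ₂ : ℝ) (hτ₁ : 1 < τ₁) (hτ₁₂ : τ₁ ≤ τ₂)
    (γ : ℝ) (hγ : 0 ≤ γ)
    (f : X → ℝ) (hfconv : ConvexOn ℝ Set.univ f)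
    (xdag : X) (hxdagsol : F xdag = y)
    (ξ : X →L[ℝ] ℝ) (hξ : ∀ u : X, f xdag + ξ (u - xdag) ≤ f u)
    (z : X) (hzmem : z ∈ Dm) (hzres : ‖F z - yδ‖ ≤ δ + γ)
    (β₁ β₂ : ℝ) (hβ₁ : β₁ ∈ Set.Ico 0 1) (hβ₂ : 0 ≤ β₂)
    (x : X) (hxmem : x ∈ Dm)
    (hxmin : ∀ v ∈ Dm, ‖F x - yδ‖ ^ p + α * f x ≤ ‖F v - yδ‖ ^ p + α * f v)
    (hxdisc : τ₁ * (δ + γ) ≤ ‖F x - yδ‖ ∧ ‖F x - yδ‖ ≤ τ₂ * (δ + γ))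
    (hVI : ξ (xdag - x) ≤ β₁ * (f x - f xdag - ξ (x - xdag)) + β₂ * ‖F x - F xdag‖) :
    ‖F x - yδ‖ ≤ τ₂ * (δ + γ) ∧
    f x - f xdag - ξ (x - xdag) ≤
      ((f z - f xdag - ξ (z - xdag)) + ‖ξ‖ * ‖z - xdag‖ +
        β₂ * (τ₂ + 1) * (δ + γ)) / (1 - β₁) := by
  subst hxdagsol
  have hlower : δ + γ ≤ ‖F x - yδ‖ :=
    (le_mul_of_one_le_left (by positivity) hτ₁.le).trans hxdisc.1
  exact ⟨hxdisc.2, (stmt_19_general (by linarith) hα hβ₁.2 hβ₂ hξ (by linarith) hzres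
    (hxmin z hzmem) hlower hxdisc.2 hVI).2⟩
end
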